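/- Let ℓ > 3 and p be primes with p ≡ 3 (mod 4) and p > 4ℓ². If −p is not a square modulo ℓ, then no non-principal left O-ideal I of reduced norm ℓ admits an element s of its right order O_R(I) with s² = −p. If −p is a square modulo ℓ, then exactly 4 of the ℓ+1 left O-ideals of reduced norm ℓ are non-principal and admit an element s of their right order with s² = −p, and these 4 ideals fall into exactly 2 left ideal classes. -/

import Mathlib

/-!
Let `α² + β² = -p` in `𝔽_ℓ`. Sending `i` and `j` to `!![0, -1; 1, 0]` and `!![α, β; β, -α]` gives an
isomorphism `O/ℓO ≅ M₂(𝔽_ℓ)` that turns the reduced norm into the determinant (`phi_mul`, `phi_ker`,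
`phi_surj`, `phi_det`). A left ideal of reduced norm `ℓ` contains `ℓ`, and its image is a nonzero
left ideal of singular matrices, hence the annihilator of a nonzero vector `v`. So the ideals of
norm `ℓ` are the `Idl v`, for `v` in the projective line, and there are `ℓ + 1` of them
(`S1_eq_Idl`, `S1_ncard`).

Let `s² = -p` with `s` in the right order of such an ideal `I`. Then `ℓs ∈ O`, and the bound
`p > 4ℓ²` forces `s = (a·j + b·k)/ℓ` with `a² + b² = ℓ²` (`sqrt_form`). If `ab ≠ 0`, then `ℓ` splits
in `ℤ[i]` and `I` is generated by a Gaussian prime above `ℓ` (`principal_of_mixed`). So for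
non-principal `I` one has `s = ±j` or `s = ±k`, and `v` is an eigenvector of the reduction of `j` or
of `k`. Both reductions have characteristic polynomial `X² + p`, so an eigenvector exists only if
`-p` is a square modulo `ℓ`.

If `-p = c²`, take `α = c` and `β = 0`: the eigenvectors of `j` are the points `∞, 0` of the
projective line and those of `k` are `1, -1`. A principal ideal of norm `ℓ` has a generator in
`ℤ[i]`, so its point satisfies `v₀² + v₁² = 0`; none of the four points does (`not_principal`).
Right multiplication by `i` exchanges the two points of each pair (`same_qi`). The two pairs lie in
different classes: a quaternion carrying one ideal to the other has norm `1`, lies in `ℚ(i)` because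
`p > 4ℓ²`, and conjugates `j` to `±k`, so it is `u(1 ± i)` with `2u² = 1`, which is impossible over
`ℚ` (`not_same`).
-/

open Quaternion

/-- The reduced norm of a quaternion: `Nrd x = x * star x` (a scalar). -/
noncomputable def Nrd {c₁ c₂ : ℚ} (x : ℍ[ℚ, c₁, c₂]) : ℚ := (x * star x).re

/-- `x ∈ ℚ` is divisible by the integer `n` within `ℤ`. -/
def IntDvd (n : ℤ) (x : ℚ) : Prop := ∃ z : ℤ, x = (n : ℚ) * (z : ℚ)

/-- `I` is a left ideal of the (maximal order whose underlying set is) `Os`. -/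
def IsLeftIdealOf {c₁ c₂ : ℚ} (Os : Set ℍ[ℚ, c₁, c₂]) (I : AddSubgroup ℍ[ℚ, c₁, c₂]) : Prop :=
  (I : Set ℍ[ℚ, c₁, c₂]) ⊆ Os ∧ ∀ x ∈ Os, ∀ y ∈ I, x * y ∈ I

/-- The left ideal `I` has reduced norm `ℓ` (gcd of reduced norms of elements is `ℓ`). -/
def HasReducedNorm {c₁ c₂ : ℚ} (I : AddSubgroup ℍ[ℚ, c₁, c₂]) (ℓ : ℤ) : Prop :=
  (∀ α ∈ I, IntDvd ℓ (Nrd α)) ∧ ∀ d : ℤ, (∀ α ∈ I, IntDvd d (Nrd α)) → d ∣ ℓ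

/-- The set `ℓO + I·r = {ℓ·x + y·r : x ∈ Os, y ∈ I}`. -/
def shiftSet {c₁ c₂ : ℚ} (ℓ : ℕ) (Os I : Set ℍ[ℚ, c₁, c₂]) (r : ℍ[ℚ, c₁, c₂]) :
    Set ℍ[ℚ, c₁, c₂] :=
  {z | ∃ x ∈ Os, ∃ y ∈ I, z = (ℓ : ℍ[ℚ, c₁, c₂]) * x + y * r}

/-- The quaternion algebra `ℍ[ℚ, −1, −p]`. -/
abbrev H1 (p : ℕ) : Type := ℍ[ℚ, -1, -(p : ℚ)]

def qi (p : ℕ) : H1 p := ⟨0, 1, 0, 0⟩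
def qj (p : ℕ) : H1 p := ⟨0, 0, 1, 0⟩
def qk (p : ℕ) : H1 p := ⟨0, 0, 0, 1⟩

/-- The maximal order `O = ℤ·1 + ℤ·i + ℤ·(1+j)/2 + ℤ·(i+k)/2` of `ℍ[ℚ,−1,−p]`,
the endomorphism ring of `y² = x³ + x` over `𝔽_{p²}` (as a set). -/
def O1728 (p : ℕ) : Set (H1 p) :=
  {z | ∃ A B C D : ℤ, z = (A : H1 p) + B • qi p +
    C • (⟨1/2, 0, 1/2, 0⟩ : H1 p) + D • (⟨0, 1/2, 0, 1/2⟩ : H1 p)}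

/-- Two left ideals are in the same left ideal class: `J = I·μ` for some `μ ≠ 0`. -/
def SameClass {c₁ c₂ : ℚ} (I J : AddSubgroup ℍ[ℚ, c₁, c₂]) : Prop :=
  ∃ μ : ℍ[ℚ, c₁, c₂], μ ≠ 0 ∧ (J : Set ℍ[ℚ, c₁, c₂]) = (· * μ) '' (I : Set ℍ[ℚ, c₁, c₂])

/-- `I` is a principal left ideal of the order with underlying set `Os`: `I = O·α`. -/
def IsPrincipalIdeal {c₁ c₂ : ℚ} (Os : Set ℍ[ℚ, c₁, c₂]) (I : AddSubgroup ℍ[ℚ, c₁, c₂]) :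
    Prop :=
  ∃ α ∈ Os, (I : Set ℍ[ℚ, c₁, c₂]) = (· * α) '' Os

/-- The set of left `O`-ideals of reduced norm `ℓ` for `O = End(E₁₇₂₈)`. -/
def S1 (p ℓ : ℕ) : Set (AddSubgroup (H1 p)) :=
  {I | IsLeftIdealOf (O1728 p) I ∧ HasReducedNorm I (ℓ : ℤ)}

/-- The set of non-principal left `O`-ideals of reduced norm `ℓ` whose right order
`O_R(I) = {s : y·s ∈ I for all y ∈ I}` contains a square root of `−p`. -/
def T1 (p ℓ : ℕ) : Set (AddSubgroup (H1 p)) :=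
  {I ∈ S1 p ℓ | ¬ IsPrincipalIdeal (O1728 p) I ∧
    ∃ s : H1 p, (∀ y ∈ I, y * s ∈ I) ∧ s * s = -(p : H1 p)}

/-! ### Integral coordinates on `O` and the reduced norm -/

/-- The element `A + B·i + C·(1+j)/2 + D·(i+k)/2` of `O`, given by its integral coordinates. -/
def mk (p : ℕ) (A B C D : ℤ) : H1 p := ⟨A + C / 2, B + D / 2, C / 2, D / 2⟩

lemma mem_O {p : ℕ} {z : H1 p} : z ∈ O1728 p ↔ ∃ A B C D : ℤ, z = mk p A B C D := by
  have key : ∀ A B C D : ℤ, (A : H1 p) + B • qi p + C • (⟨1/2, 0, 1/2, 0⟩ : H1 p) +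
      D • (⟨0, 1/2, 0, 1/2⟩ : H1 p) = mk p A B C D := by
    intro A B C D
    ext <;> simp [mk, qi] <;> ring
  constructor
  · rintro ⟨A, B, C, D, rfl⟩
    exact ⟨A, B, C, D, key A B C D⟩
  · rintro ⟨A, B, C, D, rfl⟩
    exact ⟨A, B, C, D, (key A B C D).symm⟩

lemma mk_mem {p : ℕ} (A B C D : ℤ) : mk p A B C D ∈ O1728 p := mem_O.2 ⟨A, B, C, D, rfl⟩

lemma mk_add {p : ℕ} (A B C D A' B' C' D' : ℤ) :
    mk p A B C D + mk p A' B' C' D' = mk p (A + A') (B + B') (C + C') (D + D') := by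
  ext <;> simp [mk] <;> ring

lemma mk_neg {p : ℕ} (A B C D : ℤ) : -mk p A B C D = mk p (-A) (-B) (-C) (-D) := by
  ext <;> simp [mk] <;> ring

lemma mk_zero {p : ℕ} : mk p 0 0 0 0 = 0 := by
  ext <;> simp [mk]

lemma mk_star {p : ℕ} (A B C D : ℤ) : star (mk p A B C D) = mk p (A + C) (-B) (-C) (-D) := by
  ext <;> simp [mk] <;> ring

lemma mk_int {p : ℕ} (n : ℤ) : mk p n 0 0 0 = (n : H1 p) := by
  ext <;> simp [mk]

/-- Multiplication of `O` in coordinates, where `ω = (1+j)/2` satisfies `ω² = ω - q` with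
`q = (p+1)/4`, and `ω·i = i·(1-ω)`. -/
lemma mk_mul {p : ℕ} {q : ℤ} (hq : (p : ℤ) + 1 = 4 * q) (A B C D A' B' C' D' : ℤ) :
    mk p A B C D * mk p A' B' C' D' = mk p
      (A * A' - B * B' - D * B' - q * (C * C' + D * D'))
      (A * B' + B * A' + C * B' - q * (D * C' - C * D'))
      (A * C' - B * D' + C * A' + D * B' - D * D' + (C * C' + D * D'))
      (A * D' + B * C' + D * A' - C * B' + C * D' + (D * C' - C * D')) := by
  have hq' : (p : ℚ) = 4 * q - 1 := by
    have : ((p : ℤ) : ℚ) + 1 = 4 * q := by exact_mod_cast hq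
    push_cast at this; linarith
  ext <;> simp [mk, hq'] <;> ring

lemma Nrd_eq {p : ℕ} (z : H1 p) :
    Nrd z = z.re ^ 2 + z.imI ^ 2 + p * z.imJ ^ 2 + p * z.imK ^ 2 := by
  simp [Nrd]; ring

lemma star_mul_self' {p : ℕ} (z : H1 p) : star z * z = (Nrd z : ℚ) • (1 : H1 p) := by
  ext <;> simp [Nrd_eq] <;> ring

lemma mul_star_self' {p : ℕ} (z : H1 p) : z * star z = (Nrd z : ℚ) • (1 : H1 p) := by
  ext <;> simp [Nrd_eq] <;> ring

lemma Nrd_mul {p : ℕ} (x y : H1 p) : Nrd (x * y) = Nrd x * Nrd y := by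
  simp [Nrd_eq]; ring

/-- The reduced norm in integral coordinates. -/
def nrm (q A B C D : ℤ) : ℤ := A ^ 2 + A * C + q * C ^ 2 + B ^ 2 + B * D + q * D ^ 2

lemma Nrd_mk {p : ℕ} {q : ℤ} (hq : (p : ℤ) + 1 = 4 * q) (A B C D : ℤ) :
    Nrd (mk p A B C D) = (nrm q A B C D : ℚ) := by
  have hq' : (p : ℚ) = 4 * q - 1 := by
    have : ((p : ℤ) : ℚ) + 1 = 4 * q := by exact_mod_cast hq
    push_cast at this; linarith
  simp [Nrd_eq, mk, nrm, hq']; ring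

lemma Nrd_pos {p : ℕ} (hp : 0 < p) {z : H1 p} (hz : z ≠ 0) : 0 < Nrd z := by
  have hp' : (0 : ℚ) < p := by exact_mod_cast hp
  rw [Nrd_eq]
  by_contra hcon
  have h1 := mul_nonneg hp'.le (sq_nonneg z.imJ)
  have h2 := mul_nonneg hp'.le (sq_nonneg z.imK)
  have h3 := sq_nonneg z.re
  have h4 := sq_nonneg z.imI
  apply hz
  have e1 : z.re ^ 2 = 0 := by linarith
  have e2 : z.imI ^ 2 = 0 := by linarith
  have e3 : (p : ℚ) * z.imJ ^ 2 = 0 := by linarith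
  have e4 : (p : ℚ) * z.imK ^ 2 = 0 := by linarith
  ext
  · simpa using e1
  · simpa using e2
  · simpa [hp'.ne'] using e3
  · simpa [hp'.ne'] using e4

lemma exists_inv {p : ℕ} (hp : 0 < p) {z : H1 p} (hz : z ≠ 0) :
    ∃ w : H1 p, z * w = 1 ∧ w * z = 1 := by
  have h := (Nrd_pos hp hz).ne'
  refine ⟨(Nrd z)⁻¹ • star z, ?_, ?_⟩
  · rw [mul_smul_comm, mul_star_self', smul_smul, inv_mul_cancel₀ h, one_smul]
  · rw [smul_mul_assoc, star_mul_self', smul_smul, inv_mul_cancel₀ h, one_smul]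

/-! ### Reduction modulo `ℓ` -/

/-- The standing hypotheses, together with a solution `α² + β² = -p` in `ZMod ℓ`; such a solution
gives an isomorphism of `O/ℓO` with the `2 × 2` matrices over `ZMod ℓ`. -/
structure Setup (p ℓ : ℕ) (α β : ZMod ℓ) : Prop where
  prime : ℓ.Prime
  gt : 3 < ℓ
  pp : p.Prime
  mod4 : p % 4 = 3
  lt : 4 * ℓ ^ 2 < p
  split : α ^ 2 + β ^ 2 = -(p : ZMod ℓ)

section

variable {p ℓ : ℕ} {α β : ZMod ℓ}

lemma Setup.q (S : Setup p ℓ α β) : ∃ q : ℤ, (p : ℤ) + 1 = 4 * q := ⟨((p : ℤ) + 1) / 4, by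
  have := S.mod4; omega⟩

lemma Setup.two (S : Setup p ℓ α β) : (2 : ZMod ℓ) * 2⁻¹ = 1 := by
  have := Fact.mk S.prime
  refine mul_inv_cancel₀ ?_
  intro h
  have : ((2 : ℕ) : ZMod ℓ) = 0 := by exact_mod_cast h
  rw [ZMod.natCast_eq_zero_iff] at this
  have := Nat.le_of_dvd (by norm_num) this
  have := S.gt
  omega

/-- The matrix over `ZMod ℓ` attached to integral coordinates: the images of `i` and `j` are
`!![0, -1; 1, 0]` and `!![α, β; β, -α]`. -/
def mat (α β : ZMod ℓ) (A B C D : ℤ) : Matrix (Fin 2) (Fin 2) (ZMod ℓ) :=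
  !![A + 2⁻¹ * C * (1 + α) - 2⁻¹ * D * β, -B + 2⁻¹ * C * β + 2⁻¹ * D * (α - 1);
     B + 2⁻¹ * C * β + 2⁻¹ * D * (α + 1), A + 2⁻¹ * C * (1 - α) + 2⁻¹ * D * β]

/-- The reduction map `O → M₂(ZMod ℓ)`. The floors merely read off the integral coordinates of an
element of `O`; outside `O` the value is meaningless. -/
noncomputable def phi (α β : ZMod ℓ) (z : H1 p) : Matrix (Fin 2) (Fin 2) (ZMod ℓ) :=
  mat α β ⌊z.re - z.imJ⌋ ⌊z.imI - z.imK⌋ ⌊2 * z.imJ⌋ ⌊2 * z.imK⌋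

lemma phi_mk (A B C D : ℤ) : phi α β (mk p A B C D) = mat α β A B C D := by
  have h1 : ((A : ℚ) + C / 2 - C / 2) = A := by ring
  have h2 : ((B : ℚ) + D / 2 - D / 2) = B := by ring
  have h3 : (2 * ((C : ℚ) / 2)) = C := by ring
  have h4 : (2 * ((D : ℚ) / 2)) = D := by ring
  simp only [phi, mk, h1, h2, h3, h4, Int.floor_intCast]

lemma phi_add {x y : H1 p} (hx : x ∈ O1728 p) (hy : y ∈ O1728 p) :
    phi α β (x + y) = phi α β x + phi α β y := by
  obtain ⟨A, B, C, D, rfl⟩ := mem_O.1 hx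
  obtain ⟨A', B', C', D', rfl⟩ := mem_O.1 hy
  rw [mk_add, phi_mk, phi_mk, phi_mk]
  simp only [mat]
  ext a b
  fin_cases a <;> fin_cases b <;> simp <;> ring

lemma phi_neg {x : H1 p} (hx : x ∈ O1728 p) :
    phi α β (-x) = -phi α β x := by
  obtain ⟨A, B, C, D, rfl⟩ := mem_O.1 hx
  rw [mk_neg, phi_mk, phi_mk]
  simp only [mat]
  ext a b
  fin_cases a <;> fin_cases b <;> simp <;> ring

lemma Setup.castq (S : Setup p ℓ α β) {q : ℤ} (hq : (p : ℤ) + 1 = 4 * q) :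
    α ^ 2 + β ^ 2 = 1 - 4 * (q : ZMod ℓ) := by
  have : ((p : ℤ) : ZMod ℓ) + 1 = 4 * q := by exact_mod_cast congrArg (Int.cast : ℤ → ZMod ℓ) hq
  rw [S.split]; push_cast at this; linear_combination -this

lemma phi_mul (S : Setup p ℓ α β) {x y : H1 p} (hx : x ∈ O1728 p) (hy : y ∈ O1728 p) :
    phi α β (x * y) = phi α β x * phi α β y := by
  obtain ⟨A, B, C, D, rfl⟩ := mem_O.1 hx
  obtain ⟨A', B', C', D', rfl⟩ := mem_O.1 hy
  obtain ⟨q, hq⟩ := S.q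
  have hab := S.castq hq
  have h2 := S.two
  rw [mk_mul hq, phi_mk, phi_mk, phi_mk]
  simp only [mat, Matrix.mul_fin_two]
  generalize (2 : ZMod ℓ)⁻¹ = h at *
  ext a b
  fin_cases a <;> fin_cases b <;> simp <;> grind

lemma phi_det (S : Setup p ℓ α β) {q : ℤ} (hq : (p : ℤ) + 1 = 4 * q) (A B C D : ℤ) :
    (phi α β (mk p A B C D)).det = (nrm q A B C D : ZMod ℓ) := by
  have hab := S.castq hq
  have h2 := S.two
  rw [phi_mk]
  simp only [mat, nrm, Matrix.det_fin_two_of]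
  push_cast
  generalize (2 : ZMod ℓ)⁻¹ = h at *
  grind

lemma Setup.p_ne (S : Setup p ℓ α β) : (p : ZMod ℓ) ≠ 0 := by
  intro h
  rw [ZMod.natCast_eq_zero_iff] at h
  have h1 := (Nat.prime_dvd_prime_iff_eq S.prime S.pp).1 h
  have h2 := S.lt
  have h3 := S.gt
  subst h1
  nlinarith

lemma Setup.norm_ne (S : Setup p ℓ α β) : α ^ 2 + β ^ 2 ≠ 0 := by
  rw [S.split]; exact neg_ne_zero.2 S.p_ne

lemma qi_eq : qi p = mk p 0 1 0 0 := by ext <;> simp [qi, mk]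
lemma qj_eq : qj p = mk p (-1) 0 2 0 := by ext <;> simp [qj, mk]
lemma qk_eq : qk p = mk p 0 (-1) 0 2 := by ext <;> simp [qk, mk]

lemma phi_qi : phi α β (qi p) = !![0, -1; 1, 0] := by
  rw [qi_eq, phi_mk]; simp [mat]

lemma phi_qj (S : Setup p ℓ α β) : phi α β (qj p) = !![α, β; β, -α] := by
  have h2 := S.two
  rw [qj_eq, phi_mk]
  simp only [mat]
  generalize (2 : ZMod ℓ)⁻¹ = h at *
  ext a b
  fin_cases a <;> fin_cases b <;> simp <;> grind

lemma phi_qk (S : Setup p ℓ α β) : phi α β (qk p) = !![-β, α; α, β] := by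
  have h2 := S.two
  rw [qk_eq, phi_mk]
  simp only [mat]
  generalize (2 : ZMod ℓ)⁻¹ = h at *
  ext a b
  fin_cases a <;> fin_cases b <;> simp <;> grind

lemma natCast_mul_mk (n : ℕ) (A B C D : ℤ) :
    (n : H1 p) * mk p A B C D = mk p (n * A) (n * B) (n * C) (n * D) := by
  ext <;> simp [mk] <;> ring

lemma phi_ker (S : Setup p ℓ α β) {z : H1 p} (hz : z ∈ O1728 p) (h0 : phi α β z = 0) :
    ∃ w ∈ O1728 p, z = (ℓ : H1 p) * w := by
  have := Fact.mk S.prime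
  obtain ⟨A, B, C, D, rfl⟩ := mem_O.1 hz
  have h2 := S.two
  have hn := S.norm_ne
  rw [phi_mk] at h0
  have e00 := congrFun (congrFun h0 0) 0
  have e01 := congrFun (congrFun h0 0) 1
  have e10 := congrFun (congrFun h0 1) 0
  have e11 := congrFun (congrFun h0 1) 1
  simp only [mat, Matrix.of_apply, Matrix.cons_val', Matrix.cons_val_zero, Matrix.cons_val_one,
    Matrix.zero_apply, Matrix.cons_val_fin_one] at e00 e01 e10 e11
  generalize (2 : ZMod ℓ)⁻¹ = h at *
  have f1 : (C : ZMod ℓ) * α - D * β = 0 := by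
    linear_combination e00 - e11 - (C * α - D * β) * h2
  have f2 : (C : ZMod ℓ) * β + D * α = 0 := by
    linear_combination e01 + e10 - (C * β + D * α) * h2
  have hC : (C : ZMod ℓ) = 0 := by
    have : (C : ZMod ℓ) * (α ^ 2 + β ^ 2) = 0 := by linear_combination α * f1 + β * f2
    exact (mul_eq_zero.1 this).resolve_right hn
  have hD : (D : ZMod ℓ) = 0 := by
    have : (D : ZMod ℓ) * (α ^ 2 + β ^ 2) = 0 := by linear_combination α * f2 - β * f1
    exact (mul_eq_zero.1 this).resolve_right hn
  have hA : (A : ZMod ℓ) = 0 := by rw [hC, hD] at e00; linear_combination e00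
  have hB : (B : ZMod ℓ) = 0 := by rw [hC, hD] at e10; linear_combination e10
  rw [ZMod.intCast_zmod_eq_zero_iff_dvd] at hA hB hC hD
  obtain ⟨a, rfl⟩ := hA
  obtain ⟨b, rfl⟩ := hB
  obtain ⟨c, rfl⟩ := hC
  obtain ⟨d, rfl⟩ := hD
  exact ⟨mk p a b c d, mk_mem _ _ _ _, (natCast_mul_mk _ _ _ _ _).symm⟩

lemma phi_surj (S : Setup p ℓ α β) (m : Matrix (Fin 2) (Fin 2) (ZMod ℓ)) :
    ∃ z ∈ O1728 p, phi α β z = m := by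
  have := Fact.mk S.prime
  have h2 := S.two
  have hn : (α ^ 2 + β ^ 2) * (α ^ 2 + β ^ 2)⁻¹ = 1 := mul_inv_cancel₀ S.norm_ne
  generalize (α ^ 2 + β ^ 2)⁻¹ = N at hn
  -- `a + b·i + c·j + d·k` with integers `a, b, c, d` reducing to the solution of a linear system
  have lift : ∀ x : ZMod ℓ, ∃ n : ℤ, (n : ZMod ℓ) = x := ZMod.intCast_surjective
  obtain ⟨a, ha⟩ := lift (2⁻¹ * (m 0 0 + m 1 1))
  obtain ⟨b, hb⟩ := lift (2⁻¹ * (m 1 0 - m 0 1))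
  obtain ⟨c, hc⟩ := lift (2⁻¹ * N * (α * (m 0 0 - m 1 1) + β * (m 0 1 + m 1 0)))
  obtain ⟨d, hd⟩ := lift (2⁻¹ * N * (α * (m 0 1 + m 1 0) - β * (m 0 0 - m 1 1)))
  refine ⟨mk p (a - c) (b - d) (2 * c) (2 * d), mk_mem _ _ _ _, ?_⟩
  rw [phi_mk]
  simp only [mat]
  push_cast
  rw [ha, hb, hc, hd]
  generalize (2 : ZMod ℓ)⁻¹ = h at *
  ext s t
  fin_cases s <;> fin_cases t <;> simp <;> grind

lemma O_add {x y : H1 p} (hx : x ∈ O1728 p) (hy : y ∈ O1728 p) : x + y ∈ O1728 p := by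
  obtain ⟨A, B, C, D, rfl⟩ := mem_O.1 hx
  obtain ⟨A', B', C', D', rfl⟩ := mem_O.1 hy
  rw [mk_add]; exact mk_mem _ _ _ _

lemma O_neg {x : H1 p} (hx : x ∈ O1728 p) : -x ∈ O1728 p := by
  obtain ⟨A, B, C, D, rfl⟩ := mem_O.1 hx
  rw [mk_neg]; exact mk_mem _ _ _ _

lemma O_mul (S : Setup p ℓ α β) {x y : H1 p} (hx : x ∈ O1728 p) (hy : y ∈ O1728 p) :
    x * y ∈ O1728 p := by
  obtain ⟨q, hq⟩ := S.q
  obtain ⟨A, B, C, D, rfl⟩ := mem_O.1 hx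
  obtain ⟨A', B', C', D', rfl⟩ := mem_O.1 hy
  rw [mk_mul hq]; exact mk_mem _ _ _ _

lemma O_star {x : H1 p} (hx : x ∈ O1728 p) : star x ∈ O1728 p := by
  obtain ⟨A, B, C, D, rfl⟩ := mem_O.1 hx
  rw [mk_star]; exact mk_mem _ _ _ _

lemma O_zero : (0 : H1 p) ∈ O1728 p := mk_zero (p := p) ▸ mk_mem 0 0 0 0

lemma O_int (n : ℤ) : (n : H1 p) ∈ O1728 p := mk_int (p := p) n ▸ mk_mem n 0 0 0

lemma O_nat (n : ℕ) : (n : H1 p) ∈ O1728 p := by exact_mod_cast O_int (p := p) n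

lemma O_one : (1 : H1 p) ∈ O1728 p := by exact_mod_cast O_nat (p := p) 1

lemma phi_zero : phi α β (0 : H1 p) = 0 := by
  rw [← mk_zero, phi_mk]
  simp only [mat]
  ext s t
  fin_cases s <;> fin_cases t <;> simp

lemma phi_ell : phi α β (ℓ : H1 p) = 0 := by
  have : (ℓ : H1 p) = mk p ℓ 0 0 0 := by rw [mk_int]; simp
  rw [this, phi_mk]
  simp only [mat]
  ext s t
  fin_cases s <;> fin_cases t <;> simp

/-! ### Ideals of norm `ℓ` as points of the projective line -/

/-- The left ideal of all elements of `O` whose reduction kills the vector `v`. -/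
noncomputable def Idl (p : ℕ) (α β : ZMod ℓ) (v : Fin 2 → ZMod ℓ) : AddSubgroup (H1 p) where
  carrier := {z | z ∈ O1728 p ∧ (phi α β z).mulVec v = 0}
  add_mem' := by
    rintro x y ⟨hx, hx'⟩ ⟨hy, hy'⟩
    exact ⟨O_add hx hy, by rw [phi_add hx hy, Matrix.add_mulVec, hx', hy', add_zero]⟩
  zero_mem' := ⟨O_zero, by rw [phi_zero, Matrix.zero_mulVec]⟩
  neg_mem' := by
    rintro x ⟨hx, hx'⟩
    exact ⟨O_neg hx, by rw [phi_neg hx, Matrix.neg_mulVec, hx', neg_zero]⟩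

lemma mem_Idl {v : Fin 2 → ZMod ℓ} {z : H1 p} :
    z ∈ Idl p α β v ↔ z ∈ O1728 p ∧ (phi α β z).mulVec v = 0 := Iff.rfl

lemma Nrd_int (S : Setup p ℓ α β) {z : H1 p} (hz : z ∈ O1728 p) :
    ∃ n : ℤ, Nrd z = n ∧ (phi α β z).det = n := by
  obtain ⟨q, hq⟩ := S.q
  obtain ⟨A, B, C, D, rfl⟩ := mem_O.1 hz
  exact ⟨_, Nrd_mk hq A B C D, phi_det S hq A B C D⟩

lemma IntDvd_int {d n : ℤ} : IntDvd d (n : ℚ) ↔ d ∣ n := by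
  constructor
  · rintro ⟨z, hz⟩
    exact ⟨z, by exact_mod_cast hz⟩
  · rintro ⟨z, rfl⟩
    exact ⟨z, by push_cast; rfl⟩

lemma natCast_eq_mk (n : ℕ) : (n : H1 p) = mk p n 0 0 0 := by rw [mk_int]; simp

lemma ell_mul_mem {v : Fin 2 → ZMod ℓ} (S : Setup p ℓ α β) {w : H1 p} (hw : w ∈ O1728 p) :
    (ℓ : H1 p) * w ∈ Idl p α β v := by
  refine ⟨O_mul S (O_nat ℓ) hw, ?_⟩
  rw [phi_mul S (O_nat ℓ) hw, phi_ell, Matrix.zero_mul, Matrix.zero_mulVec]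

lemma exists_mem_Idl (S : Setup p ℓ α β) (v : Fin 2 → ZMod ℓ) :
    ∃ z ∈ Idl p α β v, phi α β z = !![v 1, -v 0; 0, 0] := by
  obtain ⟨z, hz, hz'⟩ := phi_surj S !![v 1, -v 0; 0, 0]
  refine ⟨z, ⟨hz, ?_⟩, hz'⟩
  rw [hz']
  ext s
  fin_cases s
  · simp [Matrix.mulVec, dotProduct, Fin.sum_univ_two]; ring
  · simp [Matrix.mulVec, dotProduct, Fin.sum_univ_two]

/-- The norms on `Idl v` have gcd exactly `ℓ`: if all were divisible by `ℓ²`, polarization would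
put the whole ideal into `ℓO`, since the norm form has discriminant prime to `ℓ`. -/
lemma Idl_mem_S1 (S : Setup p ℓ α β) {v : Fin 2 → ZMod ℓ} (hv : v ≠ 0) :
    Idl p α β v ∈ S1 p ℓ := by
  have := Fact.mk S.prime
  refine ⟨⟨fun z hz => hz.1, ?_⟩, ?_, ?_⟩
  · rintro x hx y ⟨hy, hy'⟩
    refine ⟨O_mul S hx hy, ?_⟩
    rw [phi_mul S hx hy, ← Matrix.mulVec_mulVec, hy', Matrix.mulVec_zero]
  · rintro z ⟨hz, hz'⟩
    obtain ⟨n, hn, hd⟩ := Nrd_int S hz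
    rw [hn, IntDvd_int, ← ZMod.intCast_zmod_eq_zero_iff_dvd, ← hd]
    exact Matrix.exists_mulVec_eq_zero_iff.1 ⟨v, hv, hz'⟩
  · intro d hd
    obtain ⟨q, hq⟩ := S.q
    have hdl : d ∣ (ℓ : ℤ) ^ 2 := by
      have h1 := hd _ (ell_mul_mem S (O_one))
      rw [mul_one, natCast_eq_mk, Nrd_mk hq, IntDvd_int] at h1
      simpa [nrm] using h1
    rw [Int.natCast_pow ℓ 2 |>.symm, ← Int.natAbs_dvd, Int.natCast_dvd_natCast,
      Nat.dvd_prime_pow S.prime] at hdl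
    obtain ⟨k, hk, hk'⟩ := hdl
    rw [← Int.natAbs_dvd, hk', Int.natCast_dvd_natCast]
    by_cases hk2 : k = 2
    · exfalso
      subst hk2
      obtain ⟨z, hz, hz'⟩ := exists_mem_Idl (p := p) (α := α) (β := β) S v
      obtain ⟨A, B, C, D, rfl⟩ := mem_O.1 hz.1
      have hd' : ∀ z ∈ Idl p α β v, IntDvd ((ℓ : ℤ) ^ 2) (Nrd z) := by
        intro z hz
        obtain ⟨n, hn, -⟩ := Nrd_int S hz.1
        have := hd z hz
        rw [hn, IntDvd_int] at this ⊢
        rw [← Int.natAbs_dvd, hk'] at this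
        exact_mod_cast this
      have key : ∀ a b c e : ℤ, (ℓ : ℤ) ^ 2 ∣ nrm q (A + ℓ * a) (B + ℓ * b) (C + ℓ * c)
          (D + ℓ * e) := by
        intro a b c e
        have := hd' _ ((Idl p α β v).add_mem hz (ell_mul_mem S (mk_mem a b c e)))
        rwa [natCast_mul_mk, mk_add, Nrd_mk hq, IntDvd_int] at this
      have hl0 : (ℓ : ℤ) ≠ 0 := by exact_mod_cast S.prime.ne_zero
      have pol : ∀ x y : ℤ, (ℓ : ℤ) ^ 2 ∣ x → (ℓ : ℤ) ^ 2 ∣ y → ∀ t u : ℤ,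
          y = x + ℓ * t + ℓ ^ 2 * u → ((t : ℤ) : ZMod ℓ) = 0 := by
        intro x y hx hy t u h
        rw [ZMod.intCast_zmod_eq_zero_iff_dvd]
        have h1 : (ℓ : ℤ) ^ 2 ∣ ℓ * t := by
          have : (ℓ : ℤ) * t = y - x - ℓ ^ 2 * u := by rw [h]; ring
          rw [this]
          exact ((hy.sub hx).sub (dvd_mul_right _ _))
        rw [pow_two] at h1
        exact (mul_dvd_mul_iff_left hl0).1 h1
      have k0 := key 0 0 0 0
      have t1 := pol _ _ k0 (key 1 0 0 0) (2 * A + C) 1 (by simp only [nrm]; ring)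
      have t2 := pol _ _ k0 (key 0 1 0 0) (2 * B + D) 1 (by simp only [nrm]; ring)
      have t3 := pol _ _ k0 (key 0 0 1 0) (A + 2 * q * C) q (by simp only [nrm]; ring)
      have t4 := pol _ _ k0 (key 0 0 0 1) (B + 2 * q * D) q (by simp only [nrm]; ring)
      push_cast at t1 t2 t3 t4
      have hqz : (p : ZMod ℓ) + 1 = 4 * q := by
        exact_mod_cast congrArg (Int.cast : ℤ → ZMod ℓ) hq
      have hC : (C : ZMod ℓ) = 0 := by
        have : (p : ZMod ℓ) * C = 0 := by linear_combination 2 * t3 - t1 + C * hqz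
        exact (mul_eq_zero.1 this).resolve_left S.p_ne
      have hD : (D : ZMod ℓ) = 0 := by
        have : (p : ZMod ℓ) * D = 0 := by linear_combination 2 * t4 - t2 + D * hqz
        exact (mul_eq_zero.1 this).resolve_left S.p_ne
      have hA : (A : ZMod ℓ) = 0 := by rw [hC] at t3; linear_combination t3
      have hB : (B : ZMod ℓ) = 0 := by rw [hD] at t4; linear_combination t4
      rw [phi_mk] at hz'
      simp only [mat, hA, hB, hC, hD] at hz'
      have e0 := congrFun (congrFun hz' 0) 0
      have e1 := congrFun (congrFun hz' 0) 1
      simp at e0 e1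
      apply hv
      ext s
      fin_cases s
      · simpa using e1
      · simpa using e0.symm
    · have : k ≤ 1 := by omega
      simpa using pow_dvd_pow ℓ this

lemma ell_mem (S : Setup p ℓ α β) {I : AddSubgroup (H1 p)} (hI : I ∈ S1 p ℓ) :
    (ℓ : H1 p) ∈ I := by
  obtain ⟨⟨hsub, hmul⟩, -, hgcd⟩ := hI
  obtain ⟨d, hd⟩ := Int.subgroup_cyclic (I.comap (Int.castAddHom (H1 p)))
  have hmem : ∀ n : ℤ, (n : H1 p) ∈ I ↔ d ∣ n := by
    intro n
    rw [← Int.mem_zmultiples_iff, AddSubgroup.zmultiples_eq_closure, ← hd]; rfl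
  have h1 : d ∣ (ℓ : ℤ) := by
    apply hgcd
    intro z hz
    obtain ⟨n, hn, -⟩ := Nrd_int S (hsub hz)
    rw [hn, IntDvd_int, ← hmem]
    have h2 := hmul _ (O_star (hsub hz)) _ hz
    rw [star_mul_self', hn] at h2
    convert h2 using 1
    ext <;> simp
  exact_mod_cast (hmem ℓ).2 h1

/-- Left ideals of `M₂(ZMod ℓ)` without invertible elements are annihilators of a vector; pulled
back along the reduction, every ideal of norm `ℓ` is of the form `Idl v`. -/
lemma S1_eq_Idl (S : Setup p ℓ α β) {I : AddSubgroup (H1 p)} (hI : I ∈ S1 p ℓ) :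
    ∃ v : Fin 2 → ZMod ℓ, v ≠ 0 ∧ I = Idl p α β v := by
  have := Fact.mk S.prime
  have hl := ell_mem S hI
  obtain ⟨⟨hsub, hmul⟩, hnorm, hgcd⟩ := hI
  have hlO : ∀ w ∈ O1728 p, (ℓ : H1 p) * w ∈ I := by
    intro w hw
    rw [(Nat.cast_commute ℓ w).eq]
    exact hmul _ hw _ hl
  have hdet : ∀ z ∈ I, (phi α β z).det = 0 := by
    intro z hz
    obtain ⟨n, hn, hd⟩ := Nrd_int S (hsub hz)
    have h := hnorm z hz
    rw [hn, IntDvd_int] at h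
    rw [hd, ZMod.intCast_zmod_eq_zero_iff_dvd]; exact h
  have hlin : ∀ z ∈ I, ∀ a : Matrix (Fin 2) (Fin 2) (ZMod ℓ), ∃ z' ∈ I,
      phi α β z' = a * phi α β z := by
    intro z hz a
    obtain ⟨x, hx, rfl⟩ := phi_surj (p := p) S a
    exact ⟨x * z, hmul _ hx _ hz, phi_mul S hx (hsub hz)⟩
  obtain ⟨z₀, hz₀, hne⟩ : ∃ z ∈ I, phi α β z ≠ 0 := by
    by_contra! hcon
    have : (ℓ : ℤ) ^ 2 ∣ ℓ := by
      apply hgcd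
      intro z hz
      obtain ⟨w, hw, rfl⟩ := phi_ker S (hsub hz) (hcon z hz)
      obtain ⟨n, hn, -⟩ := Nrd_int S hw
      exact ⟨n, by rw [Nrd_mul, hn]; simp [Nrd_eq]⟩
    have h2 : ℓ ^ 2 ∣ ℓ := by exact_mod_cast this
    have h3 := Nat.le_of_dvd S.prime.pos h2
    have := S.gt
    nlinarith
  obtain ⟨r, hr⟩ : ∃ r, phi α β z₀ r ≠ 0 := by
    by_contra! hcon
    exact hne (by ext s t; rw [hcon s]; rfl)
  refine ⟨![phi α β z₀ r 1, -phi α β z₀ r 0], ?_, ?_⟩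
  · intro h
    apply hr
    have h0 := congrFun h 0
    have h1 := congrFun h 1
    ext t
    fin_cases t
    · simpa using h1
    · simpa using h0
  · ext z
    rw [mem_Idl]
    constructor
    · intro hz
      refine ⟨hsub hz, ?_⟩
      ext s
      obtain ⟨x, hx, hx'⟩ := hlin z hz (Matrix.single 0 s 1)
      obtain ⟨y, hy, hy'⟩ := hlin z₀ hz₀ (Matrix.single 1 r 1)
      have h := hdet _ (I.add_mem hx hy)
      rw [phi_add (hsub hx) (hsub hy), hx', hy', Matrix.det_fin_two] at h
      simp [Matrix.mulVec, dotProduct, Fin.sum_univ_two, Matrix.single_mul_apply_of_ne] at h ⊢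
      linear_combination h
    · rintro ⟨hz, hv⟩
      have hc : ∀ s, ∃ c : ZMod ℓ, phi α β z s = c • phi α β z₀ r := by
        intro s
        have h := congrFun hv s
        simp [Matrix.mulVec, dotProduct, Fin.sum_univ_two] at h
        by_cases h0 : phi α β z₀ r 0 = 0
        · have h1 : phi α β z₀ r 1 ≠ 0 := by
            intro h1
            apply hr
            ext t
            fin_cases t
            · exact h0
            · exact h1
          refine ⟨phi α β z s 1 / phi α β z₀ r 1, ?_⟩
          ext t
          fin_cases t
          · rw [h0] at h; simpa [h0, h1] using h
          · simp [h1]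
        · refine ⟨phi α β z s 0 / phi α β z₀ r 0, ?_⟩
          ext t
          fin_cases t
          · simp [h0]
          · simp
            field_simp
            linear_combination -h
      choose c hc using hc
      obtain ⟨z', hz', he⟩ := hlin z₀ hz₀ (Matrix.of fun s t => if t = r then c s else 0)
      have heq : phi α β z' = phi α β z := by
        rw [he]
        ext s t
        rw [hc s]
        simp [Matrix.mul_apply]
      obtain ⟨w, hw, hw'⟩ := phi_ker S (O_add hz (O_neg (hsub hz')))
        (by rw [phi_add hz (O_neg (hsub hz')), phi_neg (hsub hz'), heq, add_neg_cancel])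
      have : z = (ℓ : H1 p) * w + z' := by rw [← hw']; abel
      rw [this]
      exact I.add_mem (hlO w hw) hz'

lemma wedge_of_le (S : Setup p ℓ α β) {v w : Fin 2 → ZMod ℓ} (h : ∀ z ∈ Idl p α β v,
    (phi α β z).mulVec w = 0) : v 1 * w 0 = v 0 * w 1 := by
  obtain ⟨z, hz, hz'⟩ := exists_mem_Idl (p := p) (α := α) (β := β) S v
  have := congrFun (h z hz) 0
  rw [hz'] at this
  simp [Matrix.mulVec, dotProduct, Fin.sum_univ_two] at this
  linear_combination this

/-- If `Idl v · s ⊆ Idl v` with `s ∈ O`, then `v` is an eigenvector of the reduction of `s`. -/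
lemma wedge_of_stable (S : Setup p ℓ α β) {v : Fin 2 → ZMod ℓ} {s : H1 p} (hs : s ∈ O1728 p)
    (h : ∀ y ∈ Idl p α β v, y * s ∈ Idl p α β v) :
    v 1 * (phi α β s).mulVec v 0 = v 0 * (phi α β s).mulVec v 1 := by
  apply wedge_of_le S
  intro z hz
  rw [Matrix.mulVec_mulVec, ← phi_mul S hz.1 hs]
  exact (h z hz).2

lemma stable_of_eigen (S : Setup p ℓ α β) {v : Fin 2 → ZMod ℓ} {s : H1 p} (hs : s ∈ O1728 p)
    {c : ZMod ℓ} (h : (phi α β s).mulVec v = c • v) :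
    ∀ y ∈ Idl p α β v, y * s ∈ Idl p α β v := by
  rintro y ⟨hy, hy'⟩
  refine ⟨O_mul S hy hs, ?_⟩
  rw [phi_mul S hy hs, ← Matrix.mulVec_mulVec, h, Matrix.mulVec_smul, hy', smul_zero]

/-- Representatives of the points of the projective line over `ZMod ℓ`. -/
def pt : Option (ZMod ℓ) → (Fin 2 → ZMod ℓ)
  | none => ![1, 0]
  | some t => ![t, 1]

lemma pt_ne_zero (S : Setup p ℓ α β) (o : Option (ZMod ℓ)) : pt o ≠ 0 := by
  have := Fact.mk S.prime
  intro h
  cases o with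
  | none => simpa [pt] using congrFun h 0
  | some t => simpa [pt] using congrFun h 1

lemma Idl_smul (S : Setup p ℓ α β) {c : ZMod ℓ} (hc : c ≠ 0) (v : Fin 2 → ZMod ℓ) :
    Idl p α β (c • v) = Idl p α β v := by
  have := Fact.mk S.prime
  ext z
  rw [mem_Idl, mem_Idl, Matrix.mulVec_smul, smul_eq_zero, or_iff_right hc]

lemma S1_eq_pt (S : Setup p ℓ α β) {I : AddSubgroup (H1 p)} (hI : I ∈ S1 p ℓ) :
    ∃ o, I = Idl p α β (pt o) := by
  have := Fact.mk S.prime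
  obtain ⟨v, hv, rfl⟩ := S1_eq_Idl S hI
  by_cases h1 : v 1 = 0
  · refine ⟨none, ?_⟩
    have h0 : v 0 ≠ 0 := by
      intro h0; apply hv; ext s; fin_cases s
      · exact h0
      · exact h1
    rw [← Idl_smul S h0 (pt none)]
    congr 1
    ext s; fin_cases s <;> simp [pt, h1]
  · refine ⟨some (v 0 / v 1), ?_⟩
    rw [← Idl_smul S h1 (pt (some _))]
    congr 1
    ext s; fin_cases s <;> simp [pt]
    field_simp

lemma Idl_pt_inj (S : Setup p ℓ α β) : Function.Injective
    (fun o : Option (ZMod ℓ) => Idl p α β (pt o)) := by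
  have := Fact.mk S.prime
  intro a b h
  have h' := wedge_of_le (p := p) (v := pt a) (w := pt b) S
    (fun z hz => by have h2 : Idl p α β (pt a) = Idl p α β (pt b) := h
                    rw [h2] at hz; exact hz.2)
  cases a <;> cases b <;> simp_all [pt]

lemma S1_ncard (S : Setup p ℓ α β) : (S1 p ℓ).ncard = ℓ + 1 := by
  have := Fact.mk S.prime
  have h : S1 p ℓ = Set.range (fun o : Option (ZMod ℓ) => Idl p α β (pt o)) := by
    ext I
    constructor
    · intro hI
      obtain ⟨o, rfl⟩ := S1_eq_pt S hI
      exact ⟨o, rfl⟩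
    · rintro ⟨o, rfl⟩
      exact Idl_mem_S1 S (pt_ne_zero S o)
  rw [h, ← Set.image_univ, Set.ncard_image_of_injective _ (Idl_pt_inj S), Set.ncard_univ]
  simp

/-! ### Square roots of `-p` in right orders -/

/-- A square root of `-p` in the right order of an ideal of norm `ℓ` is `(a·j + b·k)/ℓ` with
`a² + b² = ℓ²`: it lies in `ℓ⁻¹O`, and `p > 4ℓ²` forces its `i`-coordinate to vanish. -/
lemma sqrt_form (S : Setup p ℓ α β) {I : AddSubgroup (H1 p)} (hI : I ∈ S1 p ℓ) {s : H1 p}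
    (hs : ∀ y ∈ I, y * s ∈ I) (hsq : s * s = -(p : H1 p)) :
    ∃ a b : ℤ, a ^ 2 + b ^ 2 = (ℓ : ℤ) ^ 2 ∧ s = ⟨0, 0, a / ℓ, b / ℓ⟩ := by
  have hp0 : (0 : ℚ) < p := by exact_mod_cast S.pp.pos
  have hl0 : (ℓ : ℚ) ≠ 0 := by exact_mod_cast S.prime.ne_zero
  have e0 := congrArg QuaternionAlgebra.re hsq
  have e1 := congrArg QuaternionAlgebra.imI hsq
  have e2 := congrArg QuaternionAlgebra.imJ hsq
  have e3 := congrArg QuaternionAlgebra.imK hsq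
  simp at e0 e1 e2 e3
  have hre : s.re = 0 := by
    by_contra hne
    have f1 : s.imI = 0 := by
      have : s.re * s.imI = 0 := by linarith
      exact (mul_eq_zero.1 this).resolve_left hne
    have f2 : s.imJ = 0 := by
      have : s.re * s.imJ = 0 := by linarith
      exact (mul_eq_zero.1 this).resolve_left hne
    have f3 : s.imK = 0 := by
      have : s.re * s.imK = 0 := by linarith
      exact (mul_eq_zero.1 this).resolve_left hne
    rw [f1, f2, f3] at e0
    nlinarith [mul_self_nonneg s.re]
  obtain ⟨A, B, C, D, h⟩ := mem_O.1 (hI.1.1 (hs _ (ell_mem S hI)))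
  have g0 := congrArg QuaternionAlgebra.re h
  have g1 := congrArg QuaternionAlgebra.imI h
  have g2 := congrArg QuaternionAlgebra.imJ h
  have g3 := congrArg QuaternionAlgebra.imK h
  simp [mk] at g0 g1 g2 g3
  rw [hre] at g0 e0
  have hC : (C : ℚ) = -2 * A := by linarith
  have hnorm : ((2 * B + D : ℤ) : ℚ) ^ 2 + p * ((2 * A : ℤ) : ℚ) ^ 2 + p * (D : ℚ) ^ 2
      = p * 4 * ℓ ^ 2 := by
    push_cast
    rw [show (2 : ℚ) * A = -(2 * (ℓ * s.imJ)) by rw [g2, hC]; ring,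
      show (D : ℚ) = 2 * (ℓ * s.imK) by rw [g3]; ring,
      show (2 * B : ℚ) = 2 * (ℓ * s.imI) - 2 * (ℓ * s.imK) by rw [g1, g3]; ring]
    linear_combination (-4 * (ℓ : ℚ) ^ 2) * e0
  have hnormZ : (2 * B + D) ^ 2 + p * (2 * A) ^ 2 + p * D ^ 2 = (p : ℤ) * 4 * ℓ ^ 2 := by
    exact_mod_cast hnorm
  have hpZ : Prime (p : ℤ) := Nat.prime_iff_prime_int.1 S.pp
  obtain ⟨m, hm⟩ : (p : ℤ) ∣ 2 * B + D := by
    apply hpZ.dvd_of_dvd_pow (n := 2)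
    exact ⟨4 * ℓ ^ 2 - (2 * A) ^ 2 - D ^ 2, by linear_combination hnormZ⟩
  have hp0Z : (0 : ℤ) < p := by exact_mod_cast S.pp.pos
  have hred : (p : ℤ) * m ^ 2 + (2 * A) ^ 2 + D ^ 2 = 4 * ℓ ^ 2 := by
    rw [hm] at hnormZ
    apply mul_left_cancel₀ hp0Z.ne'
    linear_combination hnormZ
  have hltZ : 4 * (ℓ : ℤ) ^ 2 < p := by exact_mod_cast S.lt
  have hm0 : m = 0 := by
    by_contra hne
    have : 1 ≤ m ^ 2 := by
      have := sq_pos_of_ne_zero hne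
      omega
    nlinarith [sq_nonneg (2 * A), sq_nonneg D]
  subst hm0
  have hD : D = -2 * B := by linarith
  refine ⟨-A, -B, ?_, ?_⟩
  · subst hD
    nlinarith
  · have hDq : (D : ℚ) = -2 * B := by exact_mod_cast hD
    ext
    · exact hre
    · have : (ℓ : ℚ) * s.imI = 0 := by rw [g1, hDq]; ring
      simpa [hl0] using this
    · simp only
      rw [eq_div_iff hl0, mul_comm, g2, hC]; push_cast; ring
    · simp only
      rw [eq_div_iff hl0, mul_comm, g3, hDq]; push_cast; ring

lemma ell_cancel (S : Setup p ℓ α β) {x y : H1 p} (h : (ℓ : H1 p) * x = (ℓ : H1 p) * y) :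
    x = y := by
  have hl0 : (ℓ : ℚ) ≠ 0 := by exact_mod_cast S.prime.ne_zero
  have g0 := congrArg QuaternionAlgebra.re h
  have g1 := congrArg QuaternionAlgebra.imI h
  have g2 := congrArg QuaternionAlgebra.imJ h
  have g3 := congrArg QuaternionAlgebra.imK h
  simp [S.prime.ne_zero] at g0 g1 g2 g3
  ext <;> assumption

/-- If `(a·j + b·k)/ℓ` with `ab ≠ 0` lies in the right order of `Idl v`, then `v` is proportional to
`(a, b)` and `Idl v = O·π` for a Gaussian prime `π` of norm `ℓ`. -/
lemma principal_of_mixed (S : Setup p ℓ α β) {v : Fin 2 → ZMod ℓ} (hv : v ≠ 0) {a b : ℤ}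
    (hab : a ^ 2 + b ^ 2 = (ℓ : ℤ) ^ 2) (ha : a ≠ 0) (hb : b ≠ 0)
    (hs : ∀ y ∈ Idl p α β v, y * (⟨0, 0, a / ℓ, b / ℓ⟩ : H1 p) ∈ Idl p α β v) :
    IsPrincipalIdeal (O1728 p) (Idl p α β v) := by
  have := Fact.mk S.prime
  have hl0 : (ℓ : ℚ) ≠ 0 := by exact_mod_cast S.prime.ne_zero
  have small : ∀ x y : ℤ, x ^ 2 + y ^ 2 = (ℓ : ℤ) ^ 2 → x ≠ 0 → y ≠ 0 → (x : ZMod ℓ) ≠ 0 := by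
    intro x y hxy hx hy h0
    rw [ZMod.intCast_zmod_eq_zero_iff_dvd] at h0
    obtain ⟨t, rfl⟩ := h0
    have ht : t ≠ 0 := by rintro rfl; simp at hx
    have h1 : 0 < t ^ 2 := sq_pos_of_ne_zero ht
    have h2 : 0 < y ^ 2 := sq_pos_of_ne_zero hy
    nlinarith [sq_nonneg (ℓ : ℤ)]
  have ha0 := small a b hab ha hb
  have hb0 := small b a (by rw [add_comm]; exact hab) hb ha
  have habF : (a : ZMod ℓ) ^ 2 + (b : ZMod ℓ) ^ 2 = 0 := by
    have := congrArg (Int.cast : ℤ → ZMod ℓ) hab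
    push_cast at this
    simpa using this
  -- the reduction of `a·j + b·k` has image in the line spanned by `v`
  have hx : (ℓ : H1 p) * (⟨0, 0, a / ℓ, b / ℓ⟩ : H1 p) = mk p (-a) (-b) (2 * a) (2 * b) := by
    ext <;> simp [mk] <;> field_simp
  have hxv : ∀ u, ∀ z ∈ Idl p α β v,
      (phi α β z).mulVec ((phi α β (mk p (-a) (-b) (2 * a) (2 * b))).mulVec u) = 0 := by
    intro u z hz
    rw [Matrix.mulVec_mulVec, ← phi_mul S hz.1 (mk_mem _ _ _ _), ← hx,
      show z * ((ℓ : H1 p) * (⟨0, 0, a / ℓ, b / ℓ⟩ : H1 p)) =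
        (ℓ : H1 p) * (z * (⟨0, 0, a / ℓ, b / ℓ⟩ : H1 p)) by
          rw [← mul_assoc, ← mul_assoc, (Nat.cast_commute ℓ z).eq],
      phi_mul S (O_nat ℓ) (hs z hz).1, phi_ell, Matrix.zero_mul, Matrix.zero_mulVec]
  have w0 := wedge_of_le S (hxv ![1, 0])
  have w1 := wedge_of_le S (hxv ![0, 1])
  have h2 := S.two
  rw [phi_mk] at w0 w1
  simp [mat, Matrix.mulVec, dotProduct, Fin.sum_univ_two] at w0 w1
  have hvab : v 1 * a = v 0 * b := by
    have : (v 1 * a - v 0 * b) * (α ^ 2 + β ^ 2) = 0 := by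
      generalize (2 : ZMod ℓ)⁻¹ = h at *
      grind
    exact sub_eq_zero.1 ((mul_eq_zero.1 this).resolve_right S.norm_ne)
  have hv0 : v 0 ≠ 0 := by
    intro h0
    rw [h0, zero_mul] at hvab
    have h1 := (mul_eq_zero.1 hvab).resolve_right ha0
    apply hv; ext s; fin_cases s
    · exact h0
    · exact h1
  -- a Gaussian integer `c + d·i` of norm `ℓ` whose reduction kills `v`
  have hmod : ℓ % 4 ≠ 3 := by
    rw [← ZMod.exists_sq_eq_neg_one_iff]
    refine ⟨a / b, ?_⟩
    field_simp
    linear_combination -habF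
  obtain ⟨c, d₀, hcd₀⟩ := Nat.Prime.sq_add_sq hmod
  have hcd₀F : (c : ZMod ℓ) ^ 2 + (d₀ : ZMod ℓ) ^ 2 = 0 := by
    have := congrArg (Nat.cast : ℕ → ZMod ℓ) hcd₀
    push_cast at this
    simpa using this
  obtain ⟨d, hcd, hd⟩ : ∃ d : ℤ, (c : ℤ) ^ 2 + d ^ 2 = ℓ ∧ (c : ZMod ℓ) * a = d * b := by
    have : ((c : ZMod ℓ) * a - d₀ * b) * (c * a + d₀ * b) = 0 := by
      linear_combination (a : ZMod ℓ) ^ 2 * hcd₀F - d₀ ^ 2 * habF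
    rcases mul_eq_zero.1 this with h | h
    · exact ⟨d₀, by exact_mod_cast hcd₀, by push_cast; exact sub_eq_zero.1 h⟩
    · refine ⟨-d₀, by rw [neg_sq]; exact_mod_cast hcd₀, ?_⟩
      push_cast
      linear_combination h
  have hcdF : (c : ZMod ℓ) ^ 2 + (d : ZMod ℓ) ^ 2 = 0 := by
    have := congrArg (Int.cast : ℤ → ZMod ℓ) hcd
    push_cast at this
    simpa using this
  have k1 : (c : ZMod ℓ) * v 0 - d * v 1 = 0 := by
    have : ((c : ZMod ℓ) * v 0 - d * v 1) * a = 0 := by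
      linear_combination v 0 * hd - d * hvab
    exact (mul_eq_zero.1 this).resolve_right ha0
  have k2 : (d : ZMod ℓ) * v 0 + c * v 1 = 0 := by
    by_cases hc : (c : ZMod ℓ) = 0
    · have hd0 : (d : ZMod ℓ) = 0 := by simpa [hc] using hcdF
      rw [hc, hd0]; ring
    · have : (c : ZMod ℓ) * ((d : ZMod ℓ) * v 0 + c * v 1) = 0 := by
        linear_combination d * k1 + v 1 * hcdF
      exact (mul_eq_zero.1 this).resolve_left hc
  have hl : ∀ x : H1 p, (ℓ : H1 p) * x = x * (mk p c (-d) 0 0 * mk p c d 0 0) := by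
    intro x
    have hcdQ : (c : ℚ) ^ 2 + (d : ℚ) ^ 2 = ℓ := by exact_mod_cast hcd
    have : mk p c (-d) 0 0 * mk p c d 0 0 = (ℓ : H1 p) := by
      ext <;> simp [mk]
      · linear_combination hcdQ
      · ring
    rw [this, (Nat.cast_commute ℓ x).eq]
  refine ⟨mk p c d 0 0, mk_mem _ _ _ _, ?_⟩
  ext y
  constructor
  · intro hy
    have hy' := hy.2
    have hk : phi α β (y * mk p c (-d) 0 0) = 0 := by
      rw [phi_mul S hy.1 (mk_mem _ _ _ _), phi_mk]
      ext s t
      have hys := congrFun hy' s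
      simp [Matrix.mulVec, dotProduct, Fin.sum_univ_two] at hys
      apply (mul_eq_zero.1 (?_ : v 0 * _ = 0)).resolve_left hv0
      fin_cases t
      · simp [mat, Matrix.mul_apply, Fin.sum_univ_two]
        refine Or.inr (mul_left_cancel₀ hv0 ?_)
        linear_combination c * hys - phi α β y s 1 * k2
      · simp [mat, Matrix.mul_apply, Fin.sum_univ_two]
        refine Or.inr (mul_left_cancel₀ hv0 ?_)
        linear_combination d * hys + phi α β y s 1 * k1
    obtain ⟨w, hw, hw'⟩ := phi_ker S (O_mul S hy.1 (mk_mem _ _ _ _)) hk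
    refine ⟨w, hw, ?_⟩
    apply ell_cancel S
    rw [hl y, ← mul_assoc y, hw', mul_assoc]
  · rintro ⟨x, hx, rfl⟩
    refine ⟨O_mul S hx (mk_mem _ _ _ _), ?_⟩
    rw [phi_mul S hx (mk_mem _ _ _ _), ← Matrix.mulVec_mulVec]
    have : (phi α β (mk p c d 0 0)).mulVec v = 0 := by
      rw [phi_mk]
      ext s
      fin_cases s
      · simp [mat, Matrix.mulVec, dotProduct, Fin.sum_univ_two]
        linear_combination k1
      · simp [mat, Matrix.mulVec, dotProduct, Fin.sum_univ_two]
        linear_combination k2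
    rw [this, Matrix.mulVec_zero]

lemma sqrt_cases (S : Setup p ℓ α β) {I : AddSubgroup (H1 p)} (hI : I ∈ S1 p ℓ)
    (hnp : ¬ IsPrincipalIdeal (O1728 p) I) {s : H1 p}
    (hs : ∀ y ∈ I, y * s ∈ I) (hsq : s * s = -(p : H1 p)) :
    (s = qj p ∨ s = -qj p) ∨ (s = qk p ∨ s = -qk p) := by
  have hl0 : (ℓ : ℚ) ≠ 0 := by exact_mod_cast S.prime.ne_zero
  obtain ⟨a, b, hab, rfl⟩ := sqrt_form S hI hs hsq
  by_cases ha : a = 0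
  · right
    subst ha
    have : b = ℓ ∨ b = -ℓ := sq_eq_sq_iff_eq_or_eq_neg.1 (by linarith)
    rcases this with rfl | rfl
    · left; ext <;> simp [qk, hl0]
    · right; ext <;> simp [qk, hl0]
  by_cases hb : b = 0
  · left
    subst hb
    have : a = ℓ ∨ a = -ℓ := sq_eq_sq_iff_eq_or_eq_neg.1 (by linarith)
    rcases this with rfl | rfl
    · left; ext <;> simp [qj, hl0]
    · right; ext <;> simp [qj, hl0]
  exfalso
  obtain ⟨v, hv, rfl⟩ := S1_eq_Idl S hI
  exact hnp (principal_of_mixed S hv hab ha hb hs)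

lemma stable_neg {I : AddSubgroup (H1 p)} {s : H1 p} (h : ∀ y ∈ I, y * -s ∈ I) :
    ∀ y ∈ I, y * s ∈ I := by
  intro y hy
  have := I.neg_mem (h y hy)
  simpa using this

lemma stable_cases (S : Setup p ℓ α β) {I : AddSubgroup (H1 p)} (hI : I ∈ S1 p ℓ)
    (hnp : ¬ IsPrincipalIdeal (O1728 p) I) {s : H1 p}
    (hs : ∀ y ∈ I, y * s ∈ I) (hsq : s * s = -(p : H1 p)) :
    (∀ y ∈ I, y * qj p ∈ I) ∨ (∀ y ∈ I, y * qk p ∈ I) := by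
  rcases sqrt_cases S hI hnp hs hsq with (rfl | rfl) | (rfl | rfl)
  · exact Or.inl hs
  · exact Or.inl (stable_neg hs)
  · exact Or.inr hs
  · exact Or.inr (stable_neg hs)

lemma qj_mem : qj p ∈ O1728 p := qj_eq (p := p) ▸ mk_mem _ _ _ _
lemma qk_mem : qk p ∈ O1728 p := qk_eq (p := p) ▸ mk_mem _ _ _ _
lemma qi_mem : qi p ∈ O1728 p := qi_eq (p := p) ▸ mk_mem _ _ _ _

/-- A generator of a principal ideal of norm `ℓ` is a Gaussian integer, because `p > 4ℓ`; its
reduction can only kill isotropic vectors. -/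
lemma not_principal (S : Setup p ℓ α β) {v : Fin 2 → ZMod ℓ} (hv : v 0 ^ 2 + v 1 ^ 2 ≠ 0) :
    ¬ IsPrincipalIdeal (O1728 p) (Idl p α β v) := by
  have := Fact.mk S.prime
  rintro ⟨x, hx, hI⟩
  have hv0 : v ≠ 0 := by rintro rfl; simp at hv
  obtain ⟨-, hnorm, hgcd⟩ := Idl_mem_S1 (p := p) S hv0
  have hxI : x ∈ Idl p α β v := by
    rw [← SetLike.mem_coe, hI]; exact ⟨1, O_one, by simp⟩
  obtain ⟨q, hq⟩ := S.q
  obtain ⟨A, B, C, D, rfl⟩ := mem_O.1 hx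
  have hn1 := hnorm _ hxI
  rw [Nrd_mk hq, IntDvd_int] at hn1
  have hn2 : nrm q A B C D ∣ ℓ := by
    apply hgcd
    intro z hz
    rw [← SetLike.mem_coe, hI] at hz
    obtain ⟨y, hy, rfl⟩ := hz
    obtain ⟨n, hn, -⟩ := Nrd_int S hy
    exact ⟨n, by simp only [Nrd_mul, hn, Nrd_mk hq]; ring⟩
  have h4 : 4 * nrm q A B C D = (2 * A + C) ^ 2 + (2 * B + D) ^ 2 + p * (C ^ 2 + D ^ 2) := by
    simp only [nrm]
    linear_combination (-C ^ 2 - D ^ 2) * hq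
  have hp0Z : (0 : ℤ) < p := by exact_mod_cast S.pp.pos
  have hn : nrm q A B C D = ℓ := by
    apply Int.dvd_antisymm _ (by positivity) hn2 hn1
    have : 0 ≤ (p : ℤ) * (C ^ 2 + D ^ 2) := by positivity
    nlinarith [sq_nonneg (2 * A + C), sq_nonneg (2 * B + D)]
  have hltZ : 4 * (ℓ : ℤ) < p := by
    have h1 : 4 * (ℓ : ℤ) ^ 2 < p := by exact_mod_cast S.lt
    have h2 : (3 : ℤ) < ℓ := by exact_mod_cast S.gt
    nlinarith
  have hCD : C ^ 2 + D ^ 2 = 0 := by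
    by_contra hne
    have h0 : 0 ≤ C ^ 2 + D ^ 2 := by positivity
    have h1 : 1 ≤ C ^ 2 + D ^ 2 := by omega
    rw [hn] at h4
    nlinarith [sq_nonneg (2 * A + C), sq_nonneg (2 * B + D)]
  have hC : C = 0 := by
    have : C ^ 2 = 0 := by linarith [sq_nonneg C, sq_nonneg D]
    simpa using this
  have hD : D = 0 := by
    have : D ^ 2 = 0 := by linarith [sq_nonneg C, sq_nonneg D]
    simpa using this
  subst hC hD
  have hm := hxI.2
  rw [phi_mk] at hm
  have m0 := congrFun hm 0
  have m1 := congrFun hm 1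
  simp [mat, Matrix.mulVec, dotProduct, Fin.sum_univ_two] at m0 m1
  have hA : (A : ZMod ℓ) = 0 := by
    have : (A : ZMod ℓ) * (v 0 ^ 2 + v 1 ^ 2) = 0 := by linear_combination v 0 * m0 + v 1 * m1
    exact (mul_eq_zero.1 this).resolve_right hv
  have hB : (B : ZMod ℓ) = 0 := by
    have : (B : ZMod ℓ) * (v 0 ^ 2 + v 1 ^ 2) = 0 := by linear_combination v 0 * m1 - v 1 * m0
    exact (mul_eq_zero.1 this).resolve_right hv
  rw [ZMod.intCast_zmod_eq_zero_iff_dvd] at hA hB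
  have hdvd : (ℓ : ℤ) ^ 2 ∣ ℓ := by
    have h1 : (ℓ : ℤ) = A ^ 2 + B ^ 2 := by rw [← hn]; simp only [nrm]; ring
    have h2 := dvd_add (pow_dvd_pow_of_dvd hA 2) (pow_dvd_pow_of_dvd hB 2)
    rwa [← h1] at h2
  have h2 : ℓ ^ 2 ∣ ℓ := by exact_mod_cast hdvd
  have h3 := Nat.le_of_dvd S.prime.pos h2
  have := S.gt
  nlinarith

/-! ### Left ideal classes -/

lemma SameClass.symm' (hp : 0 < p) {I J : AddSubgroup (H1 p)} (h : SameClass I J) :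
    SameClass J I := by
  obtain ⟨μ, hμ, h⟩ := h
  obtain ⟨ν, h1, h2⟩ := exists_inv hp hμ
  refine ⟨ν, ?_, ?_⟩
  · rintro rfl
    simp at h1
  · rw [h, Set.image_image]
    simp [mul_assoc, h1]

lemma SameClass.refl' (I : AddSubgroup (H1 p)) : SameClass I I :=
  ⟨1, one_ne_zero, by simp⟩

lemma same_qi (S : Setup p ℓ α β) (v : Fin 2 → ZMod ℓ) :
    SameClass (Idl p α β v) (Idl p α β ![-v 1, v 0]) := by
  have hii : qi p * qi p = -1 := by ext <;> simp [qi]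
  have hv : (phi α β (qi p)).mulVec v = ![-v 1, v 0] := by
    rw [phi_qi]; ext s
    fin_cases s <;> simp [Matrix.mulVec, dotProduct, Fin.sum_univ_two]
  have hv' : (phi α β (qi p)).mulVec ![-v 1, v 0] = -v := by
    rw [phi_qi]; ext s
    fin_cases s <;> simp [Matrix.mulVec, dotProduct, Fin.sum_univ_two]
  refine ⟨qi p, ?_, ?_⟩
  · intro h
    have := congrArg QuaternionAlgebra.imI h
    simp [qi] at this
  · ext z
    constructor
    · rintro ⟨hz, hz'⟩
      have hzi := O_mul S hz qi_mem
      refine ⟨-(z * qi p), ⟨O_neg hzi, ?_⟩, ?_⟩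
      · rw [phi_neg hzi, phi_mul S hz qi_mem, Matrix.neg_mulVec, ← Matrix.mulVec_mulVec, hv, hz',
          neg_zero]
      · simp [mul_assoc, hii]
    · rintro ⟨y, ⟨hy, hy'⟩, rfl⟩
      refine ⟨O_mul S hy qi_mem, ?_⟩
      rw [phi_mul S hy qi_mem, ← Matrix.mulVec_mulVec, hv', Matrix.mulVec_neg, hy', neg_zero]

lemma Nrd_int_of_same (S : Setup p ℓ α β) {I J : AddSubgroup (H1 p)} (hI : I ∈ S1 p ℓ)
    (hJ : J ∈ S1 p ℓ) {μ : H1 p} (h : ∀ y ∈ I, y * μ ∈ J) : ∃ n : ℤ, Nrd μ = n := by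
  have hl0 : (ℓ : ℚ) ≠ 0 := by exact_mod_cast S.prime.ne_zero
  have hd : ((ℓ : ℤ) * (Nrd μ).den) ∣ ℓ := by
    apply hI.2.2
    intro y hy
    obtain ⟨n, hn⟩ := hI.2.1 y hy
    obtain ⟨m, hm⟩ := hJ.2.1 _ (h y hy)
    rw [Nrd_mul, hn] at hm
    have h1 : (n : ℚ) * Nrd μ = m := by
      push_cast at hm
      rw [mul_assoc] at hm
      exact mul_left_cancel₀ hl0 hm
    have h2 : n * (Nrd μ).num = m * (Nrd μ).den := by
      have hden : ((Nrd μ).den : ℚ) ≠ 0 := by exact_mod_cast (Nrd μ).den_ne_zero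
      rw [← Rat.num_div_den (Nrd μ)] at h1
      rw [← mul_div_assoc, div_eq_iff hden] at h1
      exact_mod_cast h1
    have h3 : ((Nrd μ).den : ℤ) ∣ n := by
      have hc : IsCoprime ((Nrd μ).den : ℤ) (Nrd μ).num := by
        rw [Int.isCoprime_iff_nat_coprime]
        exact (Nrd μ).reduced.symm
      exact hc.dvd_of_dvd_mul_right ⟨m, by rw [h2, mul_comm]⟩
    obtain ⟨t, rfl⟩ := h3
    exact ⟨t, by rw [hn]; push_cast; ring⟩
  have hden : (Nrd μ).den = 1 := by
    have h1 : ℓ * (Nrd μ).den ∣ ℓ * 1 := by rw [mul_one]; exact_mod_cast hd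
    exact Nat.dvd_one.1 (Nat.dvd_of_mul_dvd_mul_left S.prime.pos h1)
  exact ⟨(Nrd μ).num, ((Rat.den_eq_one_iff _).1 hden).symm⟩

/-- An ideal stable under `j` and a nonprincipal ideal not stable under `j` lie in different
classes: a transporter `μ` would have norm `1` and satisfy `jμ = ±μk`, which forces
`μ = u(1 ± i)` with `2u² = 1`. -/
lemma not_same (S : Setup p ℓ α β) {I J : AddSubgroup (H1 p)} (hI : I ∈ S1 p ℓ)
    (hJ : J ∈ S1 p ℓ) (hIj : ∀ y ∈ I, y * qj p ∈ I) (hnp : ¬ IsPrincipalIdeal (O1728 p) J)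
    (hJj : ¬ ∀ y ∈ J, y * qj p ∈ J) : ¬ SameClass I J := by
  rintro ⟨μ, hμ, h⟩
  have hp0 : (0 : ℚ) < p := by exact_mod_cast S.pp.pos
  obtain ⟨ν, h1, h2⟩ := exists_inv S.pp.pos hμ
  have hIJ : ∀ y ∈ I, y * μ ∈ J := by
    intro y hy
    rw [← SetLike.mem_coe, h]; exact ⟨y, hy, rfl⟩
  have hJI : ∀ y ∈ J, y * ν ∈ I := by
    intro y hy
    rw [← SetLike.mem_coe, h] at hy
    obtain ⟨x, hx, rfl⟩ := hy
    simpa [mul_assoc, h1] using hx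
  have hN : Nrd μ = 1 := by
    obtain ⟨n, hn⟩ := Nrd_int_of_same S hI hJ hIJ
    obtain ⟨m, hm⟩ := Nrd_int_of_same S hJ hI hJI
    have hnm : Nrd μ * Nrd ν = 1 := by rw [← Nrd_mul, h1]; simp [Nrd_eq]
    have hpos := Nrd_pos S.pp.pos hμ
    rw [hn, hm] at hnm
    rw [hn] at hpos ⊢
    have hnm' : n * m = 1 := by exact_mod_cast hnm
    have hpos' : 0 < n := by exact_mod_cast hpos
    rcases Int.eq_one_or_neg_one_of_mul_eq_one hnm' with rfl | rfl
    · simp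
    · omega
  have hjj : qj p * qj p = -(p : H1 p) := by ext <;> simp [qj]
  have hsJ : ∀ y ∈ J, y * (ν * qj p * μ) ∈ J := by
    intro y hy
    have := hIJ _ (hIj _ (hJI y hy))
    simpa [mul_assoc] using this
  have hssq : (ν * qj p * μ) * (ν * qj p * μ) = -(p : H1 p) := by
    calc (ν * qj p * μ) * (ν * qj p * μ) = ν * qj p * (μ * ν) * qj p * μ := by
          simp only [mul_assoc]
      _ = ν * (qj p * qj p) * μ := by rw [h1]; simp only [mul_assoc, mul_one]
      _ = -(p : H1 p) := by
          rw [hjj, mul_neg, neg_mul, mul_assoc, (Nat.cast_commute p μ).eq, ← mul_assoc, h2,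
            one_mul]
  have hcomm : ∀ s : H1 p, ν * qj p * μ = s → qj p * μ = μ * s := by
    rintro s rfl
    rw [← mul_assoc, ← mul_assoc, h1, one_mul]
  -- the `j` and `k` coordinates of `μ` vanish for size reasons
  obtain ⟨A, B, C, D, hm⟩ := mem_O.1 (hJ.1.1 (hIJ _ (ell_mem S hI)))
  have hl0 : (ℓ : ℚ) ≠ 0 := by exact_mod_cast S.prime.ne_zero
  have g2 := congrArg QuaternionAlgebra.imJ hm
  have g3 := congrArg QuaternionAlgebra.imK hm
  simp [mk] at g2 g3
  rw [Nrd_eq] at hN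
  have hCD : C ^ 2 + D ^ 2 = 0 := by
    by_contra hne
    have h0 : 0 ≤ C ^ 2 + D ^ 2 := by positivity
    have h1 : 1 ≤ C ^ 2 + D ^ 2 := by omega
    have h1Q : (1 : ℚ) ≤ (C : ℚ) ^ 2 + (D : ℚ) ^ 2 := by exact_mod_cast h1
    have hltQ : 4 * (ℓ : ℚ) ^ 2 < p := by exact_mod_cast S.lt
    have e : (C : ℚ) ^ 2 + (D : ℚ) ^ 2 = 4 * ℓ ^ 2 * (μ.imJ ^ 2 + μ.imK ^ 2) := by
      rw [show (C : ℚ) = 2 * (ℓ * μ.imJ) by rw [g2]; ring,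
        show (D : ℚ) = 2 * (ℓ * μ.imK) by rw [g3]; ring]
      ring
    have e2 : (p : ℚ) * (μ.imJ ^ 2 + μ.imK ^ 2) ≤ 1 := by
      linarith [sq_nonneg μ.re, sq_nonneg μ.imI]
    nlinarith [mul_le_mul_of_nonneg_left e2 (by positivity : (0 : ℚ) ≤ 4 * ℓ ^ 2)]
  have hC : C = 0 := by
    have : C ^ 2 = 0 := by linarith [sq_nonneg C, sq_nonneg D]
    simpa using this
  have hD : D = 0 := by
    have : D ^ 2 = 0 := by linarith [sq_nonneg C, sq_nonneg D]
    simpa using this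
  have hJ0 : μ.imJ = 0 := by simpa [hC, hl0] using g2
  have hK0 : μ.imK = 0 := by simpa [hD, hl0] using g3
  rw [hJ0, hK0] at hN
  have fin : μ.re ^ 2 = μ.imI ^ 2 → False := by
    intro he
    have hsq : (2 * μ.re) * (2 * μ.re) = 2 := by linarith
    have : IsSquare (2 : ℚ) := ⟨2 * μ.re, hsq.symm⟩
    rw [Rat.isSquare_iff] at this
    have h2 : IsSquare ((2 : ℕ) : ℤ) := by simpa using this.1
    rw [Int.isSquare_natCast_iff] at h2
    exact Nat.prime_two.prime.not_isSquare h2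
  rcases sqrt_cases S hJ hnp hsJ hssq with (hs | hs) | (hs | hs)
  · exact hJj (hs ▸ hsJ)
  · exact hJj (stable_neg (hs ▸ hsJ))
  · have e := congrArg QuaternionAlgebra.imJ (hcomm _ hs)
    simp [qj, qk] at e
    apply fin; rw [e]; ring
  · have e := congrArg QuaternionAlgebra.imJ (hcomm _ hs)
    simp [qj, qk] at e
    apply fin; rw [e]

end

/-! ### Counting when `-p` is a square -/

/-- A symmetric traceless matrix `!![x, y; y, -x]` with an eigenvector has a square as the negative
of its determinant. -/
lemma isSquare_of_eigen {ℓ : ℕ} [Fact ℓ.Prime] {x y : ZMod ℓ} {v : Fin 2 → ZMod ℓ} (hv : v ≠ 0)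
    (h : v 1 * (!![x, y; y, -x].mulVec v) 0 = v 0 * (!![x, y; y, -x].mulVec v) 1) :
    IsSquare (x ^ 2 + y ^ 2) := by
  simp [Matrix.mulVec, dotProduct, Fin.sum_univ_two] at h
  by_cases h1 : v 1 = 0
  · have h0 : v 0 ≠ 0 := by
      intro h0; apply hv; ext s; fin_cases s
      · exact h0
      · exact h1
    refine ⟨x, ?_⟩
    have hy : y = 0 := by simpa [h1, h0] using h
    rw [hy]; ring
  · refine ⟨(y * v 0 - x * v 1) / v 1, ?_⟩
    field_simp
    linear_combination y * h

lemma stable_j_iff {p ℓ : ℕ} {c : ZMod ℓ} (S : Setup p ℓ c 0) (o : Option (ZMod ℓ)) :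
    (∀ y ∈ Idl p c 0 (pt o), y * qj p ∈ Idl p c 0 (pt o)) ↔ o = none ∨ o = some 0 := by
  have := Fact.mk S.prime
  have h2 := S.two
  have hn := S.norm_ne
  have hc : c ≠ 0 := by rintro rfl; simp at hn
  constructor
  · intro h
    have w := wedge_of_stable S qj_mem h
    rw [phi_qj S] at w
    cases o with
    | none => exact Or.inl rfl
    | some t =>
      right
      simp [pt, Matrix.mulVec, dotProduct, Fin.sum_univ_two] at w
      have : c * t = 0 := by
        generalize (2 : ZMod ℓ)⁻¹ = h at *
        linear_combination h * w - c * t * h2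
      rw [(mul_eq_zero.1 this).resolve_left hc]
  · rintro (rfl | rfl)
    · refine stable_of_eigen S qj_mem (c := c) ?_
      rw [phi_qj S]
      ext s; fin_cases s <;> simp [pt, Matrix.mulVec, dotProduct, Fin.sum_univ_two]
    · refine stable_of_eigen S qj_mem (c := -c) ?_
      rw [phi_qj S]
      ext s; fin_cases s <;> simp [pt, Matrix.mulVec, dotProduct, Fin.sum_univ_two]

lemma stable_k_iff {p ℓ : ℕ} {c : ZMod ℓ} (S : Setup p ℓ c 0) (o : Option (ZMod ℓ)) :
    (∀ y ∈ Idl p c 0 (pt o), y * qk p ∈ Idl p c 0 (pt o)) ↔ o = some 1 ∨ o = some (-1) := by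
  have := Fact.mk S.prime
  have hn := S.norm_ne
  have hc : c ≠ 0 := by rintro rfl; simp at hn
  constructor
  · intro h
    have w := wedge_of_stable S qk_mem h
    rw [phi_qk S] at w
    cases o with
    | none => simp [pt, Matrix.mulVec, dotProduct, Fin.sum_univ_two] at w; exact (hc w.symm).elim
    | some t =>
      simp [pt, Matrix.mulVec, dotProduct, Fin.sum_univ_two] at w
      have h1 : c * ((t - 1) * (t + 1)) = 0 := by linear_combination -w
      rcases mul_eq_zero.1 ((mul_eq_zero.1 h1).resolve_left hc) with h | h
      · left; rw [sub_eq_zero.1 h]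
      · right; rw [eq_neg_of_add_eq_zero_left h]
  · rintro (rfl | rfl)
    · refine stable_of_eigen S qk_mem (c := c) ?_
      rw [phi_qk S]
      ext s; fin_cases s <;> simp [pt, Matrix.mulVec, dotProduct, Fin.sum_univ_two]
    · refine stable_of_eigen S qk_mem (c := -c) ?_
      rw [phi_qk S]
      ext s; fin_cases s <;> simp [pt, Matrix.mulVec, dotProduct, Fin.sum_univ_two]

lemma mem_T1_iff {p ℓ : ℕ} {c : ZMod ℓ} (S : Setup p ℓ c 0) (o : Option (ZMod ℓ)) :
    Idl p c 0 (pt o) ∈ T1 p ℓ ↔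
      (o = none ∨ o = some 0) ∨ (o = some 1 ∨ o = some (-1)) := by
  have := Fact.mk S.prime
  have hS1 := Idl_mem_S1 (p := p) S (pt_ne_zero S o)
  have hjj : qj p * qj p = -(p : H1 p) := by ext <;> simp [qj]
  have hkk : qk p * qk p = -(p : H1 p) := by ext <;> simp [qk]
  constructor
  · rintro ⟨-, hnp, s, hs, hsq⟩
    rw [← stable_j_iff S, ← stable_k_iff S]
    exact stable_cases S hS1 hnp hs hsq
  · intro h
    have h2 : (2 : ZMod ℓ) ≠ 0 := by
      intro h0
      have := S.two
      rw [h0, zero_mul] at this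
      exact zero_ne_one this
    refine ⟨hS1, not_principal S ?_, ?_⟩
    · rcases h with (rfl | rfl) | (rfl | rfl) <;> simp [pt, one_add_one_eq_two, h2]
    · rcases h with h | h
      · exact ⟨qj p, (stable_j_iff S o).2 h, hjj⟩
      · exact ⟨qk p, (stable_k_iff S o).2 h, hkk⟩

lemma T1_classes {p ℓ : ℕ} {c : ZMod ℓ} (S : Setup p ℓ c 0) :
    (T1 p ℓ).ncard = 4 ∧ {C : Set (AddSubgroup (H1 p)) | ∃ I ∈ T1 p ℓ,
          C = {J ∈ T1 p ℓ | SameClass I J}}.ncard = 2 := by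
  have := Fact.mk S.prime
  have h2 : (2 : ZMod ℓ) ≠ 0 := by
    intro h0
    have := S.two
    rw [h0, zero_mul] at this
    exact zero_ne_one this
  have h11 : (1 : ZMod ℓ) ≠ -1 := by
    intro h; apply h2; linear_combination h
  have hinj := Idl_pt_inj (p := p) S
  have hS1 := fun o => Idl_mem_S1 (p := p) S (pt_ne_zero S o)
  -- the two candidate classes, as images of `{∞, 0}` and `{1, -1}`
  set f := fun o : Option (ZMod ℓ) => Idl p c 0 (pt o) with hf
  have hT : ∀ I, I ∈ T1 p ℓ ↔ I ∈ f '' {none, some 0} ∨ I ∈ f '' {some 1, some (-1)} := by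
    intro I
    constructor
    · intro hI
      obtain ⟨o, rfl⟩ := S1_eq_pt S hI.1
      rcases (mem_T1_iff S o).1 hI with h | h
      · exact Or.inl ⟨o, by simpa using h, rfl⟩
      · exact Or.inr ⟨o, by simpa using h, rfl⟩
    · rintro (⟨o, ho, rfl⟩ | ⟨o, ho, rfl⟩)
      · exact (mem_T1_iff S o).2 (Or.inl (by simpa using ho))
      · exact (mem_T1_iff S o).2 (Or.inr (by simpa using ho))
  have hcross : ∀ I ∈ f '' {none, some 0}, ∀ J ∈ f '' {some 1, some (-1)}, ¬ SameClass I J := by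
    rintro _ ⟨o, ho, rfl⟩ _ ⟨o', ho', rfl⟩
    have hJT := (hT (f o')).2 (Or.inr ⟨o', ho', rfl⟩)
    refine not_same S (hS1 o) (hS1 o') ((stable_j_iff S o).2 (by simpa using ho)) hJT.2.1 ?_
    rw [stable_j_iff S o']
    rcases ho' with rfl | rfl <;> simp
  have hs1 : SameClass (f none) (f (some 0)) := by
    have := same_qi (p := p) S (pt none)
    simpa [pt, hf] using this
  have hs2 : SameClass (f (some 1)) (f (some (-1))) := by
    have := same_qi (p := p) S (pt (some 1))
    simpa [pt, hf] using this
  have hin1 : ∀ I ∈ f '' {none, some 0}, ∀ J ∈ f '' {none, some 0}, SameClass I J := by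
    rintro _ ⟨o, (rfl | rfl), rfl⟩ _ ⟨o', (rfl | rfl), rfl⟩
    · exact SameClass.refl' _
    · exact hs1
    · exact hs1.symm' S.pp.pos
    · exact SameClass.refl' _
  have hin2 : ∀ I ∈ f '' {some 1, some (-1)}, ∀ J ∈ f '' {some 1, some (-1)},
      SameClass I J := by
    rintro _ ⟨o, (rfl | rfl), rfl⟩ _ ⟨o', (rfl | rfl), rfl⟩
    · exact SameClass.refl' _
    · exact hs2
    · exact hs2.symm' S.pp.pos
    · exact SameClass.refl' _
  have hc1 : ∀ I ∈ f '' {none, some 0}, {J ∈ T1 p ℓ | SameClass I J} = f '' {none, some 0} := by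
    intro I hI
    ext J
    constructor
    · rintro ⟨hJ, hs⟩
      exact ((hT J).1 hJ).resolve_right (fun h => hcross I hI J h hs)
    · intro hJ
      exact ⟨(hT J).2 (Or.inl hJ), hin1 I hI J hJ⟩
  have hc2 : ∀ I ∈ f '' {some 1, some (-1)},
      {J ∈ T1 p ℓ | SameClass I J} = f '' {some 1, some (-1)} := by
    intro I hI
    ext J
    constructor
    · rintro ⟨hJ, hs⟩
      exact ((hT J).1 hJ).resolve_left (fun h => hcross J h I hI (hs.symm' S.pp.pos))
    · intro hJ
      exact ⟨(hT J).2 (Or.inr hJ), hin2 I hI J hJ⟩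
  constructor
  · have hTe : T1 p ℓ = f '' (({none, some 0, some 1, some (-1)} : Finset (Option (ZMod ℓ))) :
        Set (Option (ZMod ℓ))) := by
      ext I
      rw [hT, ← Set.mem_union, ← Set.image_union]
      simp
      tauto
    rw [hTe, Set.ncard_image_of_injective _ hinj, Set.ncard_coe_finset]
    rw [Finset.card_insert_of_notMem, Finset.card_insert_of_notMem, Finset.card_pair]
    · simpa using h11
    · simp
    · simp
  · have hCe : {C : Set (AddSubgroup (H1 p)) | ∃ I ∈ T1 p ℓ,
          C = {J ∈ T1 p ℓ | SameClass I J}} = {f '' {none, some 0}, f '' {some 1, some (-1)}} := by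
      ext C
      constructor
      · rintro ⟨I, hI, rfl⟩
        rcases (hT I).1 hI with h | h
        · rw [hc1 I h]; simp
        · rw [hc2 I h]; simp
      · have m1 : f none ∈ f '' {none, some 0} := ⟨none, by simp, rfl⟩
        have m2 : f (some 1) ∈ f '' {some 1, some (-1)} := ⟨some 1, by simp, rfl⟩
        rintro (rfl | rfl)
        · exact ⟨f none, (hT _).2 (Or.inl m1), (hc1 _ m1).symm⟩
        · exact ⟨f (some 1), (hT _).2 (Or.inr m2), (hc2 _ m2).symm⟩
    rw [hCe, Set.ncard_pair]
    intro h
    have m1 : f none ∈ f '' {some 1, some (-1)} := h ▸ ⟨none, by simp, rfl⟩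
    obtain ⟨o, ho, he⟩ := m1
    have := hinj he
    subst this
    simp at ho

/-- for primes `ℓ > 3` and `p ≡ 3 (mod 4)` with `p > 4ℓ²`: if `−p` is not
a square mod `ℓ`, no non-principal left `O`-ideal of reduced norm `ℓ` has a square root
of `−p` in its right order; if `−p` is a square mod `ℓ`, exactly `4` of the `ℓ+1` such
ideals are non-principal with a square root of `−p` in their right order, and they fall
into exactly `2` left ideal classes. -/
theorem stmt18 (ℓ p : ℕ) (hℓ : ℓ.Prime) (hℓ3 : 3 < ℓ) (hp : p.Prime)
    (hp4 : p % 4 = 3) (hpl : 4 * ℓ ^ 2 < p) :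
    (¬ IsSquare (-(p : ZMod ℓ)) →
      ∀ I ∈ S1 p ℓ, ¬ IsPrincipalIdeal (O1728 p) I →
        ¬ ∃ s : H1 p, (∀ y ∈ I, y * s ∈ I) ∧ s * s = -(p : H1 p)) ∧
    (IsSquare (-(p : ZMod ℓ)) →
      (S1 p ℓ).ncard = ℓ + 1 ∧
      (T1 p ℓ).ncard = 4 ∧
      {C : Set (AddSubgroup (H1 p)) | ∃ I ∈ T1 p ℓ,
          C = {J ∈ T1 p ℓ | SameClass I J}}.ncard = 2) := by
  have := Fact.mk hℓ
  constructor
  · intro hns I hI hnp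
    rintro ⟨s, hs, hsq⟩
    obtain ⟨α, β, hαβ⟩ := ZMod.sq_add_sq ℓ (-(p : ZMod ℓ))
    have S : Setup p ℓ α β := ⟨hℓ, hℓ3, hp, hp4, hpl, hαβ⟩
    obtain ⟨v, hv, rfl⟩ := S1_eq_Idl S hI
    rcases stable_cases S hI hnp hs hsq with h | h
    · have w := wedge_of_stable S qj_mem h
      rw [phi_qj S] at w
      exact hns (hαβ ▸ isSquare_of_eigen hv w)
    · have w := wedge_of_stable S qk_mem h
      rw [phi_qk S] at w
      have h' := isSquare_of_eigen (x := -β) (y := α) hv (by simpa using w)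
      rw [neg_sq, add_comm, hαβ] at h'
      exact hns h'
  · rintro ⟨c, hc⟩
    have S : Setup p ℓ c 0 := ⟨hℓ, hℓ3, hp, hp4, hpl, by rw [hc]; ring⟩
    exact ⟨S1_ncard S, T1_classes S⟩
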